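/- Let X be a real Banach space, a < b real numbers, and f : [a,b] → X a function of bounded variation on [a,b]. If f^B and g^B are two break functions on [a,b] such that both f − f^B and f − g^B are continuous on [a,b], then f^B − g^B is constant on [a,b]; that is, the break part in the Jordan decomposition of f is determined uniquely up to an additive constant. -/

import Mathlib

/-!
The difference `h = fB - gB` is continuous on `[a,b]`, being the difference of `f - gB` and
`f - fB`, and it is again a sum of steps `c k`, `d k` located at points `s k`, now with `s` not
necessarily injective. By dominated convergence, the right jump of `h` at `p ∈ [a,b)` is the total
of the `c k` with `s k = p`, and its left jump at `p ∈ (a,b]` is the total of the `d k` with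
`s k = p` (`tsum_fiber_right_eq_zero`, `tsum_fiber_left_eq_zero`). Continuity forces all these
totals to vanish. Summing the series for `h t` along the fibres of `s`
(`tsum_eq_zero_of_fiber`) gives `h t = 0`, so the constant is in fact `0`.
-/

open Set Filter Topology

/-- `g` is a break function on `[a,b]`: on `[a,b]` it is of the form
`g(t) = Σ_{a ≤ s_k < t} c_k + Σ_{a < s_k ≤ t} d_k` for an injective countable family
`(s_k)` in `[a,b]` and families `(c_k)`, `(d_k)` in `X` with `Σ_k (‖c_k‖ + ‖d_k‖) < ∞`. -/
def IsBreakFunction {X : Type*} [NormedAddCommGroup X] (a b : ℝ) (g : ℝ → X) : Prop :=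
  ∃ (ι : Type) (_ : Countable ι) (s : ι → ℝ) (c d : ι → X),
    Function.Injective s ∧ (∀ k, s k ∈ Set.Icc a b) ∧
    Summable (fun k => ‖c k‖ + ‖d k‖) ∧
    ∀ t ∈ Set.Icc a b,
      g t = ∑' k, ((if a ≤ s k ∧ s k < t then c k else 0) +
                   (if a < s k ∧ s k ≤ t then d k else 0))

section BreakSeries

variable {X κ : Type*} [NormedAddCommGroup X]

/-- The `k`-th term of the series defining a break function, evaluated at `t`. -/
noncomputable def breakTerm (a : ℝ) (s : κ → ℝ) (c d : κ → X) (t : ℝ) (k : κ) : X :=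
  (if a ≤ s k ∧ s k < t then c k else 0) + (if a < s k ∧ s k ≤ t then d k else 0)

lemma norm_ite_le (P : Prop) [Decidable P] (x : X) : ‖if P then x else 0‖ ≤ ‖x‖ := by
  split_ifs <;> simp

lemma norm_breakTerm_le (a : ℝ) (s : κ → ℝ) (c d : κ → X) (t : ℝ) (k : κ) :
    ‖breakTerm a s c d t k‖ ≤ ‖c k‖ + ‖d k‖ :=
  (norm_add_le _ _).trans (add_le_add (norm_ite_le _ _) (norm_ite_le _ _))

variable [CompleteSpace X]

lemma summable_breakTerm {a : ℝ} {s : κ → ℝ} {c d : κ → X}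
    (hsum : Summable fun k => ‖c k‖ + ‖d k‖) (t : ℝ) : Summable (breakTerm a s c d t) :=
  Summable.of_norm_bounded hsum (norm_breakTerm_le a s c d t)

/-- If the break series has limit `∑' k, L k` along a filter by termwise convergence, and is
continuous there with value at `p`, then the termwise jumps `L k - breakTerm a s c d p k`
add up to zero. -/
lemma tsum_jump_eq_zero {a p : ℝ} {s : κ → ℝ} {c d : κ → X} {l : Filter ℝ} [l.NeBot]
    (hsum : Summable fun k => ‖c k‖ + ‖d k‖) {L : κ → X} (hL : ∀ k, ‖L k‖ ≤ ‖c k‖ + ‖d k‖)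
    (hlim : ∀ k, ∀ᶠ t in l, breakTerm a s c d t k = L k)
    (hcont : Tendsto (fun t => ∑' k, breakTerm a s c d t k) l
      (𝓝 (∑' k, breakTerm a s c d p k))) :
    ∑' k, (L k - breakTerm a s c d p k) = 0 := by
  have h1 : Tendsto (fun t => ∑' k, breakTerm a s c d t k) l (𝓝 (∑' k, L k)) :=
    tendsto_tsum_of_dominated_convergence hsum
      (fun k => tendsto_const_nhds.congr' ((hlim k).mono fun _ h => h.symm))
      (Eventually.of_forall fun t k => norm_breakTerm_le a s c d t k)
  rw [(Summable.of_norm_bounded hsum hL).tsum_sub (summable_breakTerm hsum p),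
    tendsto_nhds_unique h1 hcont, sub_self]

lemma tsum_fiber_right_eq_zero {a b p : ℝ} {s : κ → ℝ} {c d : κ → X}
    (hsum : Summable fun k => ‖c k‖ + ‖d k‖)
    (hcont : ContinuousOn (fun t => ∑' k, breakTerm a s c d t k) (Icc a b))
    (hp : p ∈ Ico a b) : ∑' k, (if s k = p then c k else 0) = 0 := by
  have hc : Tendsto (fun t => ∑' k, breakTerm a s c d t k) (𝓝[>] p)
      (𝓝 (∑' k, breakTerm a s c d p k)) := by
    have h : ContinuousWithinAt _ (Ioc p b) p := (hcont p ⟨hp.1, hp.2.le⟩).mono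
      (fun x hx => ⟨hp.1.trans hx.1.le, hx.2⟩)
    rwa [ContinuousWithinAt, nhdsWithin_Ioc_eq_nhdsGT hp.2] at h
  have key := tsum_jump_eq_zero (p := p) hsum
    (L := fun k => (if a ≤ s k ∧ s k ≤ p then c k else 0) +
      (if a < s k ∧ s k ≤ p then d k else 0))
    (fun k => (norm_add_le _ _).trans (add_le_add (norm_ite_le _ _) (norm_ite_le _ _)))
    (fun k => by
      rcases le_or_gt (s k) p with h | h
      · filter_upwards [self_mem_nhdsWithin] with t ht
        have ht : p < t := ht
        simp [breakTerm, h, h.trans_lt ht, (h.trans_lt ht).le]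
      · filter_upwards [Ioo_mem_nhdsGT h] with t ht
        simp [breakTerm, h.not_ge, ht.2.not_ge, ht.2.not_gt]) hc
  refine (tsum_congr fun k => ?_).trans key
  rcases lt_trichotomy (s k) p with h | h | h
  · simp [breakTerm, h, h.ne, h.le]
  · simp [breakTerm, h, hp.1]
  · simp [breakTerm, h.ne', h.not_ge, h.not_gt]

lemma tsum_fiber_left_eq_zero {a b p : ℝ} {s : κ → ℝ} {c d : κ → X}
    (hsum : Summable fun k => ‖c k‖ + ‖d k‖)
    (hcont : ContinuousOn (fun t => ∑' k, breakTerm a s c d t k) (Icc a b))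
    (hp : p ∈ Ioc a b) : ∑' k, (if s k = p then d k else 0) = 0 := by
  have hc : Tendsto (fun t => ∑' k, breakTerm a s c d t k) (𝓝[<] p)
      (𝓝 (∑' k, breakTerm a s c d p k)) := by
    have h : ContinuousWithinAt _ (Ico a p) p := (hcont p ⟨hp.1.le, hp.2⟩).mono
      (fun x hx => ⟨hx.1, hx.2.le.trans hp.2⟩)
    rwa [ContinuousWithinAt, nhdsWithin_Ico_eq_nhdsLT hp.1] at h
  have key := tsum_jump_eq_zero (p := p) hsum
    (L := fun k => (if a ≤ s k ∧ s k < p then c k else 0) +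
      (if a < s k ∧ s k < p then d k else 0))
    (fun k => (norm_add_le _ _).trans (add_le_add (norm_ite_le _ _) (norm_ite_le _ _)))
    (fun k => by
      rcases lt_or_ge (s k) p with h | h
      · filter_upwards [Ioo_mem_nhdsLT h] with t ht
        simp [breakTerm, h, ht.1, ht.1.le]
      · filter_upwards [self_mem_nhdsWithin] with t ht
        have ht : t < p := ht
        simp [breakTerm, h.not_gt, (ht.trans_le h).not_ge, (ht.trans_le h).not_gt]) hc
  rw [← neg_eq_zero, ← tsum_neg]
  refine (tsum_congr fun k => ?_).trans key
  rcases lt_trichotomy (s k) p with h | h | h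
  · simp [breakTerm, h, h.ne, h.le]
  · simp [breakTerm, h, hp.1]
  · simp [breakTerm, h.ne', h.not_ge, h.not_gt]

/-- A summable family whose total over each fibre of `s` above `P` vanishes has vanishing total
over `s ⁻¹' P`. -/
lemma tsum_eq_zero_of_fiber {s : κ → ℝ} {c : κ → X} (hc : Summable fun k => ‖c k‖)
    (P : ℝ → Prop) [DecidablePred P]
    (h : ∀ p, P p → ∑' k, (if s k = p then c k else 0) = 0) :
    ∑' k, (if P (s k) then c k else 0) = 0 := by
  have hs : Summable fun k => if P (s k) then c k else 0 :=
    Summable.of_norm_bounded hc fun k => norm_ite_le _ _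
  rw [← (hs.hasSum.tsum_fiberwise s).tsum_eq]
  refine (tsum_congr fun p => ?_).trans tsum_zero
  rw [tsum_subtype (s ⁻¹' {p}) fun k => if P (s k) then c k else 0]
  by_cases hp : P p
  · refine (tsum_congr fun k => ?_).trans (h p hp)
    by_cases hk : s k = p <;> simp [indicator, hk, hp]
  · refine (tsum_congr fun k => ?_).trans tsum_zero
    by_cases hk : s k = p <;> simp [indicator, hk, hp]

/-- A break series that is continuous on `[a,b]` vanishes there; `s` need not be injective. -/
lemma tsum_breakTerm_eq_zero {a b t : ℝ} {s : κ → ℝ} {c d : κ → X}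
    (hsum : Summable fun k => ‖c k‖ + ‖d k‖)
    (hcont : ContinuousOn (fun t => ∑' k, breakTerm a s c d t k) (Icc a b))
    (ht : t ∈ Icc a b) : ∑' k, breakTerm a s c d t k = 0 := by
  have hc : Summable fun k => ‖c k‖ :=
    Summable.of_nonneg_of_le (fun _ => norm_nonneg _)
      (fun k => le_add_of_nonneg_right (norm_nonneg (d k))) hsum
  have hd : Summable fun k => ‖d k‖ :=
    Summable.of_nonneg_of_le (fun _ => norm_nonneg _)
      (fun k => le_add_of_nonneg_left (norm_nonneg (c k))) hsum
  have h1 := tsum_eq_zero_of_fiber hc (fun p => a ≤ p ∧ p < t) fun p hp =>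
    tsum_fiber_right_eq_zero hsum hcont (p := p) ⟨hp.1, hp.2.trans_le ht.2⟩
  have h2 := tsum_eq_zero_of_fiber hd (fun p => a < p ∧ p ≤ t) fun p hp =>
    tsum_fiber_left_eq_zero hsum hcont (p := p) ⟨hp.1, hp.2.trans ht.2⟩
  unfold breakTerm
  rw [Summable.tsum_add (Summable.of_norm_bounded hc fun k => norm_ite_le _ _)
    (Summable.of_norm_bounded hd fun k => norm_ite_le _ _), h1, h2, add_zero]

end BreakSeries

/-- **Jordan decomposition, uniqueness** (Theorem 3.1, uniqueness part).
If `f : [a,b] → X` is of bounded variation and `f^B`, `g^B` are break functions on `[a,b]`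
such that both `f - f^B` and `f - g^B` are continuous on `[a,b]`, then `f^B - g^B` is
constant on `[a,b]`; i.e. the break part of `f` is unique up to an additive constant. -/
theorem jordan_decomposition_unique
    {X : Type*} [NormedAddCommGroup X] [NormedSpace ℝ X] [CompleteSpace X]
    {a b : ℝ} (hab : a < b) (f fB gB : ℝ → X)
    (hf : BoundedVariationOn f (Set.Icc a b))
    (hfB : IsBreakFunction a b fB) (hgB : IsBreakFunction a b gB)
    (hfC : ContinuousOn (fun t => f t - fB t) (Set.Icc a b))
    (hgC : ContinuousOn (fun t => f t - gB t) (Set.Icc a b)) :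
    ∃ v : X, ∀ t ∈ Set.Icc a b, fB t - gB t = v := by
  obtain ⟨ι, _, s, c, d, -, -, hsum, hfB⟩ := hfB
  obtain ⟨ι', _, s', c', d', -, -, hsum', hgB⟩ := hgB
  -- Merge both series into one over `ι ⊕ ι'`, with the steps of `gB` negated.
  have hS : Summable fun k : ι ⊕ ι' =>
      ‖Sum.elim c (fun k => -c' k) k‖ + ‖Sum.elim d (fun k => -d' k) k‖ := by
    refine Summable.sum _ hsum ?_
    simpa [Function.comp_def] using hsum'
  have hdiff : ∀ t ∈ Icc a b, fB t - gB t = ∑' k, breakTerm a (Sum.elim s s')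
      (Sum.elim c fun k => -c' k) (Sum.elim d fun k => -d' k) t k := by
    intro t ht
    have h1 := (summable_breakTerm (a := a) (s := s) hsum t).hasSum
    have h2 := (summable_breakTerm (a := a) (s := s') hsum' t).hasSum.neg
    have h3 : ∀ k, -breakTerm a s' c' d' t k = breakTerm a (Sum.elim s s')
        (Sum.elim c fun k => -c' k) (Sum.elim d fun k => -d' k) t (Sum.inr k) := by
      intro k
      change _ = breakTerm a s' (fun k => -c' k) (fun k => -d' k) t k
      simp only [breakTerm, neg_add]
      split_ifs <;> simp
    have h4 := HasSum.sum (f := breakTerm a (Sum.elim s s')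
      (Sum.elim c fun k => -c' k) (Sum.elim d fun k => -d' k) t) h1 ((funext h3 : _ = _) ▸ h2)
    rw [h4.tsum_eq, hfB t ht, hgB t ht, sub_eq_add_neg]
    rfl
  refine ⟨0, fun t ht => ?_⟩
  rw [hdiff t ht]
  refine tsum_breakTerm_eq_zero hS ((hgC.sub hfC).congr fun x hx => ?_) ht
  rw [← hdiff x hx]
  simp
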